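/- arXiv:2112.00258 — 12 statements merged into one kernel-verified Lean document; each statement's English description precedes it below -/
import Mathlib

section
/- Let E and F be measurable spaces, b ≥ 1, and let W : Ω → F and X = (X_0, …, X_b) : Ω → E^{b+1} be random elements on a probability space (Ω, P). Suppose that for every permutation σ of the index set {0, 1, …, b}, the pair (W, (X_{σ(0)}, …, X_{σ(b)})) has the same joint distribution as (W, (X_0, …, X_b)). Let T : F × E^{b+1} → ℝ^{b+1} be measurable and X-symmetric in its second argument, i.e., T(w, x ∘ σ) = T(w, x) ∘ σ for every permutation σ of {0, 1, …, b}. Then the random vector (T_0(W, X), …, T_b(W, X)) is exchangeable; in particular all of its coordinates have the same distribution. -/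
open MeasureTheory

/-- **Proposition 1 (exchangeability of X-symmetric statistics).**
If for every permutation `σ` of the index set `{0, …, b}` the pair
`(W, (X_{σ 0}, …, X_{σ b}))` has the same joint law as `(W, (X_0, …, X_b))`,
and `T` is `X`-symmetric in its second argument, then the random vector
`(T_0(W,X), …, T_b(W,X))` is exchangeable; in particular all of its
coordinates have the same distribution. -/
theorem crrt_stmt_0 {Ω E F : Type*} [MeasurableSpace Ω] [MeasurableSpace E]
    [MeasurableSpace F]
    (P : Measure Ω) [IsProbabilityMeasure P] (b : ℕ) (hb : 1 ≤ b)
    (W : Ω → F) (X : Ω → Fin (b + 1) → E)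
    (hW : Measurable W) (hX : Measurable X)
    (hexch : ∀ σ : Equiv.Perm (Fin (b + 1)),
      P.map (fun ω => (W ω, fun i => X ω (σ i))) = P.map (fun ω => (W ω, X ω)))
    (T : F × (Fin (b + 1) → E) → Fin (b + 1) → ℝ) (hT : Measurable T)
    (hsym : ∀ (w : F) (x : Fin (b + 1) → E) (σ : Equiv.Perm (Fin (b + 1))),
      T (w, fun i => x (σ i)) = fun i => T (w, x) (σ i)) :
    (∀ σ : Equiv.Perm (Fin (b + 1)),
      P.map (fun ω => fun i => T (W ω, X ω) (σ i)) = P.map (fun ω => T (W ω, X ω))) ∧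
    (∀ i j : Fin (b + 1),
      P.map (fun ω => T (W ω, X ω) i) = P.map (fun ω => T (W ω, X ω) j)) := by
  have hXi : ∀ i, Measurable (fun ω => X ω i) := fun i => (measurable_pi_apply i).comp hX
  have h1 : ∀ σ : Equiv.Perm (Fin (b + 1)),
      P.map (fun ω => fun i => T (W ω, X ω) (σ i)) = P.map (fun ω => T (W ω, X ω)) := by
    intro σ
    have h := congrArg (Measure.map T) (hexch σ)
    rw [Measure.map_map hT (hW.prodMk (measurable_pi_lambda _ fun i => hXi (σ i))),
      Measure.map_map hT (hW.prodMk hX)] at h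
    have e : (T ∘ fun ω => (W ω, fun i => X ω (σ i)))
        = fun ω => fun i => T (W ω, X ω) (σ i) := by
      funext ω
      exact hsym (W ω) (X ω) σ
    rw [e] at h
    exact h
  refine ⟨h1, fun i j => ?_⟩
  have hTm : Measurable (fun ω => T (W ω, X ω)) := hT.comp (hW.prodMk hX)
  have hTs : Measurable (fun ω => fun k => T (W ω, X ω) (Equiv.swap i j k)) :=
    measurable_pi_lambda _ fun k => (measurable_pi_apply (Equiv.swap i j k)).comp hTm
  have h := congrArg (Measure.map (fun v : Fin (b + 1) → ℝ => v j)) (h1 (Equiv.swap i j))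
  rw [Measure.map_map (measurable_pi_apply j)
      hTs,
    Measure.map_map (measurable_pi_apply j) hTm] at h
  simpa [Function.comp_def] using h
end

section
/- Let n ≥ 1, let t : {0, 1, …, n−1} → ℝ be any function, and let α ∈ [0, 1]. Then the number of indices s ∈ {0, 1, …, n−1} such that #{k ∈ {0, 1, …, n−1} : t(s) ≤ t(k)} ≤ α·n is at most α·n. -/
/-- **Deterministic counting lemma behind rank p-value validity.**
For any `t : Fin n → ℝ` and `α ∈ [0,1]`, the number of indices `s` whose
"rank count" `#{k : t s ≤ t k}` is at most `α·n` is itself at most `α·n`. -/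
theorem crrt_stmt_2 (n : ℕ) (hn : 1 ≤ n) (t : Fin n → ℝ) (α : ℝ)
    (hα : α ∈ Set.Icc (0 : ℝ) 1) :
    ((Finset.univ.filter fun s : Fin n =>
        ((Finset.univ.filter fun k : Fin n => t s ≤ t k).card : ℝ) ≤ α * n).card : ℝ)
      ≤ α * n := by
  rcases Finset.eq_empty_or_nonempty (Finset.univ.filter fun s : Fin n =>
        ((Finset.univ.filter fun k : Fin n => t s ≤ t k).card : ℝ) ≤ α * n) with h | h
  · rw [h]
    simpa using mul_nonneg hα.1 (Nat.cast_nonneg n)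
  · obtain ⟨m, hm, hmin⟩ := Finset.exists_min_image _ t h
    refine le_trans ?_ (Finset.mem_filter.1 hm).2
    exact_mod_cast Finset.card_le_card fun x hx =>
      Finset.mem_filter.2 ⟨Finset.mem_univ x, hmin x hx⟩
end

section
/- Let b ≥ 1, let t : {0, 1, …, b} → ℝ be a fixed function, and let σ be a uniformly distributed random permutation of {0, 1, …, b}. Define the random p-value p = (1/(b+1)) · #{k ∈ {0, 1, …, b} : t(σ(0)) ≤ t(σ(k))}. Then for every α ∈ [0, 1], P(p ≤ α) ≤ α. -/
theorem crrt_aux_card (b : ℕ) (G : Finset (Fin (b + 1))) :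
    (Finset.univ.filter fun σ : Equiv.Perm (Fin (b + 1)) => σ 0 ∈ G).card
      = G.card * b.factorial := by
  have h : (Finset.univ.filter fun σ : Equiv.Perm (Fin (b + 1)) => σ 0 ∈ G)
      = (G ×ˢ (Finset.univ : Finset (Equiv.Perm (Fin b)))).map
          (Equiv.Perm.decomposeFin (n := b)).symm.toEmbedding := by
    ext σ
    obtain ⟨⟨p, e⟩, rfl⟩ := (Equiv.Perm.decomposeFin (n := b)).symm.surjective σ
    rw [Finset.mem_map_equiv, Equiv.symm_symm, Equiv.apply_symm_apply]
    simp
  rw [h, Finset.card_map, Finset.card_product, Finset.card_univ, Fintype.card_perm,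
    Fintype.card_fin]

/-- **Validity of the rank p-value under a uniform random permutation.**
Let `t : Fin (b+1) → ℝ` be fixed and let `σ` be a uniformly distributed random
permutation of `{0, …, b}`.  With `p σ = #{k : t (σ 0) ≤ t (σ k)} / (b+1)`, we have
`P(p ≤ α) ≤ α` for every `α ∈ [0,1]`; here the probability is the fraction of
permutations realizing the event. -/
theorem crrt_stmt_3 (b : ℕ) (hb : 1 ≤ b) (t : Fin (b + 1) → ℝ) (α : ℝ)
    (hα : α ∈ Set.Icc (0 : ℝ) 1) :
    ((Finset.univ.filter fun σ : Equiv.Perm (Fin (b + 1)) =>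
          ((Finset.univ.filter fun k : Fin (b + 1) => t (σ 0) ≤ t (σ k)).card : ℝ)
              / (b + 1) ≤ α).card : ℝ)
        / (Fintype.card (Equiv.Perm (Fin (b + 1))) : ℝ) ≤ α := by
  classical
  have hpos : (0 : ℝ) < (b : ℝ) + 1 := by positivity
  have hr : ∀ σ : Equiv.Perm (Fin (b + 1)),
      (Finset.univ.filter fun k : Fin (b + 1) => t (σ 0) ≤ t (σ k)).card
        = (Finset.univ.filter fun k : Fin (b + 1) => t (σ 0) ≤ t k).card := by
    intro σ
    refine Finset.card_bij (fun k _ => σ k) ?_ ?_ ?_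
    · intro k hk
      simpa using hk
    · intro a _ c _ h
      exact σ.injective h
    · intro k hk
      exact ⟨σ.symm k, by simpa using hk, by simp⟩
  set G : Finset (Fin (b + 1)) := Finset.univ.filter fun j =>
    ((Finset.univ.filter fun k : Fin (b + 1) => t j ≤ t k).card : ℝ) / (b + 1) ≤ α with hG
  have hE : (Finset.univ.filter fun σ : Equiv.Perm (Fin (b + 1)) =>
          ((Finset.univ.filter fun k : Fin (b + 1) => t (σ 0) ≤ t (σ k)).card : ℝ)
              / (b + 1) ≤ α)
      = Finset.univ.filter fun σ : Equiv.Perm (Fin (b + 1)) => σ 0 ∈ G := by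
    apply Finset.filter_congr
    intro σ _
    rw [hr σ, hG, Finset.mem_filter]
    simp
  have hcard : (G.card : ℝ) ≤ α * (b + 1) := by
    rcases G.eq_empty_or_nonempty with h | h
    · rw [h]
      simpa using mul_nonneg hα.1 hpos.le
    · obtain ⟨j, hj, hmin⟩ := G.exists_min_image t h
      have h1 : G.card ≤ (Finset.univ.filter fun k : Fin (b + 1) => t j ≤ t k).card :=
        Finset.card_le_card fun k hk => by simpa using hmin k hk
      have h2 := (Finset.mem_filter.mp hj).2
      rw [div_le_iff₀ hpos] at h2
      exact le_trans (by exact_mod_cast h1) h2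
  rw [hE, crrt_aux_card, Fintype.card_perm, Fintype.card_fin, Nat.factorial_succ]
  have hf : (0 : ℝ) < (b.factorial : ℝ) := by exact_mod_cast b.factorial_pos
  push_cast
  rw [div_le_iff₀ (by positivity), ← mul_assoc]
  exact mul_le_mul_of_nonneg_right hcard hf.le
end

section
/- Let E be a measurable space, b ≥ 1, and let μ and ν be probability measures on E. On a probability space let X ~ ν and let X^(1), …, X^(b) be i.i.d. with law μ, with X, X^(1), …, X^(b) mutually independent. Let T : E^{b+1} → ℝ^{b+1} be measurable and X-symmetric, i.e., T(x ∘ σ) = T(x) ∘ σ for every permutation σ of {0, 1, …, b}. Write (T_0, …, T_b) = T(X, X^(1), …, X^(b)) and define the p-value p = (1/(b+1)) · #{k ∈ {0, 1, …, b} : T_0 ≤ T_k}. Then for every α ∈ [0, 1], P(p ≤ α) ≤ α + d_TV(ν, μ). -/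
open MeasureTheory ProbabilityTheory

theorem crrt_count {n : ℕ} (t : Fin n → ℝ) (m : ℝ) (hm : 0 ≤ m) :
    ((Finset.univ.filter fun j : Fin n =>
      ((Finset.univ.filter fun k : Fin n => t j ≤ t k).card : ℝ) ≤ m).card : ℝ) ≤ m := by
  set J := Finset.univ.filter fun j : Fin n =>
      ((Finset.univ.filter fun k : Fin n => t j ≤ t k).card : ℝ) ≤ m with hJ
  rcases J.eq_empty_or_nonempty with h | h
  · simp [h, hm]
  · obtain ⟨j, hj, hmin⟩ := J.exists_min_image t h
    have h1 : J ⊆ Finset.univ.filter fun k : Fin n => t j ≤ t k := by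
      intro k hk
      simpa using hmin k hk
    have h2 : ((Finset.univ.filter fun k : Fin n => t j ≤ t k).card : ℝ) ≤ m := by
      simpa [hJ] using hj
    exact le_trans (by exact_mod_cast Finset.card_le_card h1) h2

theorem crrt_pi {E : Type*} [MeasurableSpace E] {b : ℕ} (κ μ : Measure E)
    [IsProbabilityMeasure κ] [IsProbabilityMeasure μ] (m : Fin (b + 1) → Measure E)
    [∀ i, IsProbabilityMeasure (m i)]
    (h0 : m 0 = κ) (hs : ∀ j : Fin b, m j.succ = μ) (A : Set (Fin (b + 1) → E))
    (hA : MeasurableSet A) :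
    Measure.pi m A = ∫⁻ x, Measure.pi (fun _ : Fin b => μ)
      (Prod.mk x ⁻¹' ((MeasurableEquiv.piFinSuccAbove (fun _ => E) 0).symm ⁻¹' A)) ∂κ := by
  have h := (measurePreserving_piFinSuccAbove m 0).symm
  rw [← h.measure_preimage hA.nullMeasurableSet, Measure.prod_apply (h.measurable hA)]
  simp [h0, hs]

theorem crrt_tv {E : Type*} [MeasurableSpace E] (μ ν : Measure E)
    [IsProbabilityMeasure μ] [IsProbabilityMeasure ν] (f : E → ENNReal) (hf : Measurable f)
    (hf1 : ∀ x, f x ≤ 1) (d : ENNReal) (hd : ∀ B, MeasurableSet B → ν B ≤ μ B + d) :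
    ∫⁻ x, f x ∂ν ≤ ∫⁻ x, f x ∂μ + d := by
  have key : ∀ κ : Measure E, IsProbabilityMeasure κ →
      ∫⁻ x, f x ∂κ = ∫⁻ t in Set.Ioo (0 : ℝ) 1, κ {x | t < (f x).toReal} := by
    intro κ _
    have e : ∀ x, f x = ENNReal.ofReal (f x).toReal := fun x =>
      (ENNReal.ofReal_toReal (ne_top_of_le_ne_top ENNReal.one_ne_top (hf1 x))).symm
    rw [lintegral_congr e, lintegral_eq_lintegral_meas_lt κ
      (Filter.Eventually.of_forall fun x => ENNReal.toReal_nonneg) hf.ennreal_toReal.aemeasurable]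
    rw [← lintegral_indicator measurableSet_Ioi, ← lintegral_indicator measurableSet_Ioo]
    congr 1
    ext t
    by_cases h0 : 0 < t
    · by_cases h1 : t < 1
      · simp [h0, h1]
      · have : {x | t < (f x).toReal} = ∅ := by
          ext x
          have h2 : (f x).toReal ≤ 1 := by
            simpa using ENNReal.toReal_mono ENNReal.one_ne_top (hf1 x)
          simp only [Set.mem_ofPred_eq, Set.mem_empty_iff_false, iff_false, not_lt]
          linarith [not_lt.1 h1]
        simp [h0, h1, this]
    · simp [h0]
  rw [key ν inferInstance, key μ inferInstance]
  calc _ ≤ ∫⁻ t in Set.Ioo (0 : ℝ) 1, (μ {x | t < (f x).toReal} + d) :=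
        lintegral_mono fun t => hd _ (measurableSet_lt measurable_const hf.ennreal_toReal)
    _ = _ := by rw [lintegral_add_right _ measurable_const]; simp

theorem crrt_null {E : Type*} [MeasurableSpace E] {b : ℕ} (μ : Measure E)
    [IsProbabilityMeasure μ] (T : (Fin (b + 1) → E) → Fin (b + 1) → ℝ) (hT : Measurable T)
    (hsym : ∀ (x : Fin (b + 1) → E) (σ : Equiv.Perm (Fin (b + 1))),
      T (fun i => x (σ i)) = fun i => T x (σ i))
    (m : ℝ) (hm : 0 ≤ m) (A : Fin (b + 1) → Set (Fin (b + 1) → E))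
    (hA : A = fun j => {x | ((Finset.univ.filter fun k => T x j ≤ T x k).card : ℝ) ≤ m})
    (hAm : ∀ j, MeasurableSet (A j)) :
    (b + 1) * Measure.pi (fun _ : Fin (b + 1) => μ) (A 0) ≤ ENNReal.ofReal m := by
  set ρ := Measure.pi (fun _ : Fin (b + 1) => μ)
  have h1 : ∀ j, ρ (A j) = ρ (A 0) := by
    intro j
    have mp := measurePreserving_piCongrLeft (fun _ : Fin (b + 1) => μ) (Equiv.swap 0 j)
    rw [← mp.measure_preimage (hAm 0).nullMeasurableSet]
    congr 1
    ext x
    have e : (MeasurableEquiv.piCongrLeft (fun _ : Fin (b + 1) => E) (Equiv.swap 0 j)) x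
        = fun i => x (Equiv.swap 0 j i) := by
      ext i
      have := MeasurableEquiv.piCongrLeft_apply_apply (β := fun _ : Fin (b + 1) => E)
        (Equiv.swap 0 j) x (Equiv.swap 0 j i)
      simpa using this
    simp only [Set.mem_preimage, e, hA, Set.mem_ofPred_eq, hsym, Equiv.swap_apply_left]
    have : (Finset.univ.filter fun k => T x j ≤ T x k).card =
        (Finset.univ.filter fun k => T x j ≤ T x (Equiv.swap 0 j k)).card := by
      symm
      apply Finset.card_equiv (Equiv.swap 0 j)
      simp
    rw [this]
  have h2 : ∑ j, ρ (A j) = (b + 1) * ρ (A 0) := by simp [h1]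
  rw [← h2]
  calc ∑ j, ρ (A j) = ∫⁻ x, ∑ j, (A j).indicator 1 x ∂ρ := by
        rw [lintegral_finsetSum _ fun j _ => measurable_one.indicator (hAm j)]
        simp [lintegral_indicator_one, hAm]
    _ ≤ ∫⁻ x, ENNReal.ofReal m ∂ρ := by
        classical
        apply lintegral_mono
        intro x
        beta_reduce
        have := crrt_count (T x) m hm
        simp only [Set.indicator_apply, Pi.one_apply, Finset.sum_boole]
        rw [← ENNReal.ofReal_natCast]
        apply ENNReal.ofReal_le_ofReal
        convert this using 4
        simp [hA]
    _ = _ := by simp [ρ]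

open MeasureTheory ProbabilityTheory

/-- **Theorem 2 (robustness of the CRRT under misspecification).**
Let `X ~ ν` and let `X^(1), …, X^(b)` be i.i.d. with law `μ`, all mutually
independent.  For any measurable `X`-symmetric statistic `T`, the CRRT p-value
`p = #{k : T_0 ≤ T_k}/(b+1)` computed from `(X, X^(1), …, X^(b))` satisfies
`P(p ≤ α) ≤ α + d_TV(ν, μ)` for every `α ∈ [0,1]`, where
`d_TV(ν, μ) = sup { |ν(B) − μ(B)| : B measurable }`. -/
theorem crrt_stmt_7 {Ω E : Type*} [MeasurableSpace Ω] [MeasurableSpace E]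
    (P : Measure Ω) [IsProbabilityMeasure P] (b : ℕ) (hb : 1 ≤ b)
    (μ ν : Measure E) [IsProbabilityMeasure μ] [IsProbabilityMeasure ν]
    (X : Ω → E) (Xp : Fin b → Ω → E)
    (hX : Measurable X) (hXp : ∀ k, Measurable (Xp k))
    (hlawX : P.map X = ν) (hlawXp : ∀ k, P.map (Xp k) = μ)
    (hindep : iIndepFun (Fin.cons (α := fun _ => Ω → E) X Xp) P)
    (T : (Fin (b + 1) → E) → Fin (b + 1) → ℝ) (hT : Measurable T)
    (hsym : ∀ (x : Fin (b + 1) → E) (σ : Equiv.Perm (Fin (b + 1))),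
      T (fun i => x (σ i)) = fun i => T x (σ i))
    (α : ℝ) (hα : α ∈ Set.Icc (0 : ℝ) 1) :
    P {ω | ((Finset.univ.filter fun k : Fin (b + 1) =>
          T (Fin.cons (α := fun _ => E) (X ω) fun j => Xp j ω) 0 ≤
            T (Fin.cons (α := fun _ => E) (X ω) fun j => Xp j ω) k).card : ℝ) / (b + 1) ≤ α}
      ≤ ENNReal.ofReal
          (α + ⨆ B : {B : Set E // MeasurableSet B}, |(ν B).toReal - (μ B).toReal|) := by
  set m : ℝ := α * (b + 1) with hm
  have hb0 : (0 : ℝ) < b + 1 := by positivity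
  have hm0 : 0 ≤ m := mul_nonneg hα.1 hb0.le
  set d := ⨆ B : {B : Set E // MeasurableSet B}, |(ν B).toReal - (μ B).toReal| with hd
  set A : Fin (b + 1) → Set (Fin (b + 1) → E) :=
    fun j => {x | ((Finset.univ.filter fun k => T x j ≤ T x k).card : ℝ) ≤ m} with hA
  have hAm : ∀ j, MeasurableSet (A j) := by
    intro j
    have : Measurable fun x => ((Finset.univ.filter fun k => T x j ≤ T x k).card : ℝ) := by
      simp only [Finset.card_filter, Nat.cast_sum]
      refine Finset.measurable_sum _ fun k _ => ?_
      have hs : MeasurableSet {x | T x j ≤ T x k} :=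
        measurableSet_le ((measurable_pi_apply j).comp hT) ((measurable_pi_apply k).comp hT)
      simp only [Nat.cast_ite]
      exact Measurable.ite hs measurable_const measurable_const
    exact measurableSet_le this measurable_const
  have hbd : BddAbove (Set.range fun B : {B : Set E // MeasurableSet B} =>
      |(ν B).toReal - (μ B).toReal|) := by
    refine ⟨1, ?_⟩
    rintro _ ⟨B, rfl⟩
    have h1 : (ν B).toReal ≤ 1 := measureReal_le_one (μ := ν)
    have h2 : (μ B).toReal ≤ 1 := measureReal_le_one (μ := μ)
    have h3 := (ν (B : Set E)).toReal_nonneg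
    have h4 := (μ (B : Set E)).toReal_nonneg
    simp only [abs_le]
    constructor <;> linarith
  have hd0 : 0 ≤ d := Real.iSup_nonneg fun B => abs_nonneg _
  have hTV : ∀ B, MeasurableSet B → ν B ≤ μ B + ENNReal.ofReal d := by
    intro B hB
    have h := le_ciSup hbd ⟨B, hB⟩
    have h' := le_trans (le_abs_self _) h
    rw [← ENNReal.ofReal_toReal (measure_ne_top ν B), ← ENNReal.ofReal_toReal (measure_ne_top μ B),
      ← ENNReal.ofReal_add ENNReal.toReal_nonneg hd0]
    apply ENNReal.ofReal_le_ofReal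
    simp only at h'
    linarith
  set Z := Fin.cons (α := fun _ => Ω → E) X Xp with hZ
  have hZm : ∀ i, Measurable (Z i) := by
    intro i
    refine Fin.cases ?_ ?_ i
    · exact hX
    · exact hXp
  have hmap := (iIndepFun_iff_map_fun_eq_pi_map fun i => (hZm i).aemeasurable).1 hindep
  have : ∀ i, IsProbabilityMeasure (P.map (Z i)) := fun i =>
    Measure.isProbabilityMeasure_map (hZm i).aemeasurable
  have hset : {ω | ((Finset.univ.filter fun k : Fin (b + 1) =>
          T (Fin.cons (α := fun _ => E) (X ω) fun j => Xp j ω) 0 ≤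
            T (Fin.cons (α := fun _ => E) (X ω) fun j => Xp j ω) k).card : ℝ) / (b + 1) ≤ α}
      = (fun ω i => Z i ω) ⁻¹' A 0 := by
    ext ω
    have e : (fun i => Z i ω) = Fin.cons (α := fun _ => E) (X ω) fun j => Xp j ω := by
      ext i
      refine Fin.cases ?_ ?_ i
      · rfl
      · intro j; rfl
    simp only [Set.mem_preimage, e, hA, Set.mem_ofPred_eq, hm, div_le_iff₀ hb0]
  rw [hset, ← Measure.map_apply (measurable_pi_lambda _ hZm) (hAm 0), hmap,
    crrt_pi ν μ _ (by exact hlawX) (by exact hlawXp) _ (hAm 0),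
    ENNReal.ofReal_add hα.1 hd0]
  refine (crrt_tv μ ν _ ?_ (fun x => prob_le_one) _ hTV).trans ?_
  · exact measurable_measure_prodMk_left
      ((MeasurableEquiv.piFinSuccAbove (fun _ => E) 0).symm.measurable (hAm 0))
  gcongr
  rw [← crrt_pi μ μ (fun _ => μ) rfl (fun _ => rfl) _ (hAm 0)]
  have h := crrt_null μ T hT hsym m hm0 A hA hAm
  have e : ENNReal.ofReal m = (b + 1) * ENNReal.ofReal α := by
    rw [hm, mul_comm, ENNReal.ofReal_mul hb0.le, ENNReal.ofReal_add (by positivity) zero_le_one]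
    simp
  rw [e] at h
  exact (ENNReal.mul_le_mul_iff_right (by simp) (by finiteness)).1 h
end

section
/- Let b ≥ 1, let w : {0, 1, …, b} → [0, ∞) be nonnegative weights, let s ∈ {0, 1, …, b}, and let ε_1, …, ε_b ∈ ℝ. For k ∈ {1, …, b} let d^s_(k) denote the k-th smallest value of the multiset {w_r : r ∈ {0, …, b}, r ≠ s}. Suppose that for every k ∈ {1, …, b}, w_s ≤ e^{ε_k} · d^s_(b+1−k) (i.e., w_s is at most e^{ε_k} times the k-th largest of the other weights). Then w_s · (1 + e^{−ε_1} + … + e^{−ε_b}) ≤ w_0 + w_1 + … + w_b. -/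
/-- **Deterministic weight inequality (upper-bound direction, Theorem 3 core).**
Let `w : Fin (b+1) → [0,∞)` and `s` an index.  Writing `d^s_(1) ≤ … ≤ d^s_(b)` for the
sorted values of `{w r : r ≠ s}`, if for every `k ∈ {1, …, b}` we have
`w s ≤ e^{ε_k} · d^s_(b+1−k)` (the `k`-th largest of the other weights), then
`w s · (1 + Σ_k e^{−ε_k}) ≤ Σ_r w r`.  Here `ε k` (for `k : Fin b`) stands for
`ε_{k+1}`, and `d^s_(b+1−(k+1)) = d^s_(b−k)` is the entry of the ascending sort at
0-based position `b − 1 − k`. -/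
theorem crrt_stmt_8 (b : ℕ) (hb : 1 ≤ b) (w : Fin (b + 1) → ℝ) (hw : ∀ r, 0 ≤ w r)
    (s : Fin (b + 1)) (ε : Fin b → ℝ)
    (h : ∀ k : Fin b,
      w s ≤ Real.exp (ε k) *
        ((((Finset.univ.erase s).val.map w).sort (· ≤ ·)).getD (b - 1 - k.val) 0)) :
    w s * (1 + ∑ k : Fin b, Real.exp (-ε k)) ≤ ∑ r, w r := by
  generalize hl : ((Finset.univ.erase s).val.map w).sort (· ≤ ·) = l at h
  have hlen : l.length = b := by
    rw [← hl, Multiset.length_sort, Multiset.card_map]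
    simp
  have hsum : l.sum = ∑ r ∈ Finset.univ.erase s, w r := by
    rw [← Multiset.sum_coe, ← hl, Multiset.sort_eq]
    rfl
  have hk : ∀ k : Fin b, w s * Real.exp (-ε k) ≤ l.getD (b - 1 - k.val) 0 := by
    intro k
    rw [Real.exp_neg, ← div_eq_mul_inv, div_le_iff₀ (Real.exp_pos _), mul_comm]
    exact h k
  have hs2 : ∑ k : Fin b, l.getD (b - 1 - k.val) 0 = l.sum := by
    rw [Fin.sum_univ_eq_sum_range (fun i => l.getD (b - 1 - i) 0) b,
      Finset.sum_range_reflect (fun i => l.getD i 0) b, ← hlen,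
      ← Fin.sum_univ_eq_sum_range (fun i => l.getD i 0), ← Fin.sum_univ_getElem]
    exact Finset.sum_congr rfl fun i _ => by simp
  rw [← Finset.add_sum_erase _ w (Finset.mem_univ s), ← hsum, ← hs2, mul_add, mul_one,
    Finset.mul_sum]
  have := Finset.sum_le_sum (fun k (_ : k ∈ Finset.univ) => hk k)
  linarith
end

section
/- Let b ≥ 1 and α ∈ [0, 1] with λ = ⌊(b+1)α⌋, and let ε_1, …, ε_b ∈ ℝ. On a probability space let W = (W_0, …, W_b) be a random vector of strictly positive weights, and let S be a random index in {0, 1, …, b} whose conditional distribution given W satisfies P(S = s | W) = W_s / (W_0 + … + W_b). For an index s and k ∈ {1, …, b}, let d^s_(k)(W) denote the k-th smallest value of the multiset {W_r : r ≠ s}. Let R ⊆ {0, 1, …, b} be any (possibly W-measurably chosen) set of indices with |R| ≤ λ. Then P( S ∈ R and for all k ∈ {1, …, b}: W_S ≤ e^{ε_k} · d^S_(b+1−k)(W) ) ≤ λ / (1 + e^{−ε_1} + … + e^{−ε_b}). -/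
open MeasureTheory

lemma crrt_aux_sum (b : ℕ) (w : Fin (b + 1) → ℝ) (s : Fin (b + 1)) :
    ∑ k : Fin b, ((((Finset.univ.erase s).val.map w).sort (· ≤ ·)).getD (b - 1 - k.val) 0)
      = ∑ r ∈ Finset.univ.erase s, w r := by
  set l := ((Finset.univ.erase s).val.map w).sort (· ≤ ·) with hl
  have hlen : l.length = b := by
    rw [hl, Multiset.length_sort]; simp
  have hsum : l.sum = ∑ r ∈ Finset.univ.erase s, w r := by
    rw [← Multiset.sum_coe, hl, Multiset.sort_eq]; rfl
  rw [← hsum, ← Equiv.sum_comp Fin.revPerm]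
  clear_value l
  subst hlen
  rw [← Fin.sum_univ_getElem l]
  refine Finset.sum_congr rfl fun k _ => ?_
  have hk := k.isLt
  have : l.length - 1 - (Fin.revPerm k).val = k.val := by
    simp only [Fin.revPerm_apply, Fin.val_rev]; omega
  rw [this, List.getD_eq_getElem _ _ hk]

lemma crrt_aux_pt (b : ℕ) (ε : Fin b → ℝ) (w : Fin (b + 1) → ℝ) (s : Fin (b + 1))
    (h : ∀ k : Fin b, w s ≤ Real.exp (ε k) *
          ((((Finset.univ.erase s).val.map w).sort (· ≤ ·)).getD (b - 1 - k.val) 0)) :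
    w s * (1 + ∑ k : Fin b, Real.exp (-ε k)) ≤ ∑ r, w r := by
  rw [← Finset.add_sum_erase _ _ (Finset.mem_univ s), ← crrt_aux_sum, mul_add, mul_one,
    Finset.mul_sum]
  gcongr with k
  rw [Real.exp_neg, ← div_eq_mul_inv, div_le_iff₀' (Real.exp_pos _)]
  exact h k

/-- **Theorem 3 core ('Type 1 Error Upper Bound 2', finite-sample form).**
Let `W = (W_0, …, W_b)` be a random vector of strictly positive weights, and let `S` be
a random index whose conditional distribution given `W` is proportional to the weights:
`P(S = s | W) = W_s / Σ_r W_r` (stated via conditional expectation given `σ(W)`).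
Let `λ = ⌊(b+1)α⌋` and let `R` be a `W`-measurably chosen set of indices of cardinality
at most `λ`.  Then the probability that `S ∈ R` and simultaneously, for every
`k ∈ {1, …, b}`, `W_S ≤ e^{ε_k} ·` (the `k`-th largest of `{W_r : r ≠ S}`), is at most
`λ / (1 + Σ_k e^{−ε_k})`.  Here `ε k` (for `k : Fin b`) stands for `ε_{k+1}`, and the
`(k+1)`-th largest of the other weights is the entry of the ascending sort at 0-based
position `b − 1 − k`. -/
theorem crrt_stmt_10 {Ω : Type*} [mΩ : MeasurableSpace Ω]
    (P : Measure Ω) [IsProbabilityMeasure P]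
    (b : ℕ) (hb : 1 ≤ b) (α : ℝ) (hα : α ∈ Set.Icc (0 : ℝ) 1) (ε : Fin b → ℝ)
    (W : Ω → Fin (b + 1) → ℝ) (hWmeas : Measurable W) (hWpos : ∀ ω i, 0 < W ω i)
    (S : Ω → Fin (b + 1)) (hS : Measurable S)
    (hcond : ∀ s : Fin (b + 1),
      P[Set.indicator {ω | S ω = s} (fun _ => (1 : ℝ))|MeasurableSpace.comap W inferInstance]
        =ᵐ[P] fun ω => W ω s / ∑ r, W ω r)
    (R : (Fin (b + 1) → ℝ) → Finset (Fin (b + 1)))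
    (hRmeas : @Measurable _ _ _ ⊤ R)
    (hRcard : ∀ x, (R x).card ≤ ⌊(b + 1 : ℝ) * α⌋₊) :
    P {ω | S ω ∈ R (W ω) ∧ ∀ k : Fin b,
        W ω (S ω) ≤ Real.exp (ε k) *
          ((((Finset.univ.erase (S ω)).val.map (W ω)).sort (· ≤ ·)).getD (b - 1 - k.val) 0)}
      ≤ ENNReal.ofReal
          ((⌊(b + 1 : ℝ) * α⌋₊ : ℝ) / (1 + ∑ k : Fin b, Real.exp (-ε k))) := by
  set C : ℝ := 1 + ∑ k : Fin b, Real.exp (-ε k) with hC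
  have hCpos : 0 < C := by positivity
  set L := ⌊(b + 1 : ℝ) * α⌋₊ with hL
  let B : Fin (b + 1) → Set (Fin (b + 1) → ℝ) := fun s => {x | s ∈ R x ∧ x s * C ≤ ∑ r, x r}
  have hB : ∀ s, MeasurableSet (B s) := by
    intro s
    refine MeasurableSet.inter (s₁ := {x | s ∈ R x}) (s₂ := {x | x s * C ≤ ∑ r, x r}) ?_ ?_
    · exact @hRmeas {F | s ∈ F} trivial
    · exact measurableSet_le (by fun_prop) (by fun_prop)
  have hm : MeasurableSpace.comap W inferInstance ≤ mΩ := hWmeas.comap_le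
  have hA : ∀ s, MeasurableSet (W ⁻¹' B s) := fun s => hWmeas (hB s)
  have hSs : ∀ s, MeasurableSet {ω | S ω = s} := fun s => hS (measurableSet_singleton s)
  have hsub : {ω | S ω ∈ R (W ω) ∧ ∀ k : Fin b,
        W ω (S ω) ≤ Real.exp (ε k) *
          ((((Finset.univ.erase (S ω)).val.map (W ω)).sort (· ≤ ·)).getD (b - 1 - k.val) 0)}
      ⊆ ⋃ s, ({ω | S ω = s} ∩ W ⁻¹' B s) := by
    rintro ω ⟨h1, h2⟩
    exact Set.mem_iUnion.2 ⟨S ω, rfl, h1, crrt_aux_pt b ε (W ω) (S ω) h2⟩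
  have hone : ∀ s, P.real ({ω | S ω = s} ∩ W ⁻¹' B s)
      = ∫ ω, (W ⁻¹' B s).indicator (fun ω => W ω s / ∑ r, W ω r) ω ∂P := by
    intro s
    rw [integral_indicator (hA s), ← setIntegral_congr_ae (hA s)
      ((hcond s).mono fun ω h _ => h),
      setIntegral_condExp hm ((integrable_const _).indicator (hSs s)) ⟨B s, hB s, rfl⟩,
      setIntegral_indicator (hSs s)]
    simp [Set.inter_comm]
  have hint : ∀ s, Integrable ((W ⁻¹' B s).indicator (fun ω => W ω s / ∑ r, W ω r)) P := by
    intro s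
    exact (integrable_condExp.congr (hcond s)).indicator (hA s)
  have hreal : P.real (⋃ s, ({ω | S ω = s} ∩ W ⁻¹' B s)) ≤ L / C := by
    calc _ ≤ ∑ s, P.real ({ω | S ω = s} ∩ W ⁻¹' B s) := measureReal_iUnion_fintype_le _
      _ = ∫ ω, ∑ s, (W ⁻¹' B s).indicator (fun ω => W ω s / ∑ r, W ω r) ω ∂P := by
        rw [integral_finsetSum _ fun s _ => hint s]
        exact Finset.sum_congr rfl fun s _ => hone s
      _ ≤ ∫ ω, (L / C : ℝ) ∂P := by
        refine integral_mono (integrable_finsetSum _ fun s _ => hint s) (integrable_const _) ?_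
        intro ω
        have hpos : 0 < ∑ r, W ω r := Finset.sum_pos (fun i _ => hWpos ω i) ⟨0, Finset.mem_univ _⟩
        calc ∑ s, (W ⁻¹' B s).indicator (fun ω => W ω s / ∑ r, W ω r) ω
            ≤ ∑ s, if s ∈ R (W ω) then 1 / C else 0 := by
              refine Finset.sum_le_sum fun s _ => ?_
              by_cases h : ω ∈ W ⁻¹' B s
              · rw [Set.indicator_of_mem h, if_pos h.1, div_le_div_iff₀ hpos hCpos, one_mul]
                exact h.2
              · rw [Set.indicator_of_notMem h]
                split_ifs <;> positivity
          _ = (R (W ω)).card / C := by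
              simp [div_eq_mul_inv]
          _ ≤ L / C := by
              gcongr
              exact hRcard _
      _ = L / C := by simp
  refine (measure_mono hsub).trans ?_
  rw [← ofReal_measureReal]
  exact ENNReal.ofReal_le_ofReal hreal
end

section
/- Let (E, 𝓔) be a measurable space and let μ and ν be finite measures on E with μ atomless. Let A ∈ 𝓔 with μ(A) = α₀ > 0 and ν(A) = α₀ + d for some d ≥ 0, and let β ∈ [0, α₀]. Then sup { ν(B) : B ∈ 𝓔, B ⊆ A, μ(B) = β } ≥ β + d·β/α₀. -/
open MeasureTheory ENNReal

theorem crrt_small {E : Type*} [MeasurableSpace E] (μ : Measure E) [IsFiniteMeasure μ]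
    (hatomless : ∀ B : Set E, MeasurableSet B → 0 < μ B →
      ∃ C ⊆ B, MeasurableSet C ∧ 0 < μ C ∧ μ C < μ B)
    (B : Set E) (hB : MeasurableSet B) (hpos : 0 < μ B) (n : ℕ) :
    ∃ C ⊆ B, MeasurableSet C ∧ 0 < μ C ∧ 2 ^ n * μ C ≤ μ B := by
  induction n with
  | zero => exact ⟨B, subset_rfl, hB, hpos, by simp⟩
  | succ n ih =>
    obtain ⟨C, hCB, hC, hC0, hCle⟩ := ih
    obtain ⟨D, hDC, hD, hD0, hDlt⟩ := hatomless C hC hC0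
    have hsum : μ D + μ (C \ D) = μ C := by
      have := measure_inter_add_diff (μ := μ) C hD
      rwa [Set.inter_eq_self_of_subset_right hDC] at this
    rcases le_total (μ D) (μ (C \ D)) with h | h
    · refine ⟨D, hDC.trans hCB, hD, hD0, le_trans ?_ hCle⟩
      rw [pow_succ, mul_assoc, two_mul]
      gcongr
      rw [← hsum]
      gcongr
    · refine ⟨C \ D, Set.diff_subset.trans hCB, hC.diff hD, ?_, le_trans ?_ hCle⟩
      · rw [pos_iff_ne_zero]
        intro h0
        rw [h0, add_zero] at hsum
        exact hDlt.ne hsum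
      · rw [pow_succ, mul_assoc, two_mul]
        gcongr
        rw [← hsum]
        gcongr

theorem crrt_small' {E : Type*} [MeasurableSpace E] (μ : Measure E) [IsFiniteMeasure μ]
    (hatomless : ∀ B : Set E, MeasurableSet B → 0 < μ B →
      ∃ C ⊆ B, MeasurableSet C ∧ 0 < μ C ∧ μ C < μ B)
    (B : Set E) (hB : MeasurableSet B) (hpos : 0 < μ B) (ε : ℝ≥0∞) (hε : 0 < ε) :
    ∃ C ⊆ B, MeasurableSet C ∧ 0 < μ C ∧ μ C ≤ ε := by
  obtain ⟨n, hn⟩ := ENNReal.exists_nat_mul_gt hε.ne' (measure_ne_top μ B)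
  obtain ⟨C, h1, h2, h3, h4⟩ := crrt_small μ hatomless B hB hpos n
  refine ⟨C, h1, h2, h3, ?_⟩
  by_contra! hlt
  have hle : (n : ℝ≥0∞) ≤ 2 ^ n := by exact_mod_cast (Nat.lt_two_pow_self (n := n)).le
  exact absurd (hn.trans_le ((mul_le_mul' hle hlt.le).trans h4)) (lt_irrefl _)

theorem crrt_sierpinski {E : Type*} [MeasurableSpace E] (μ : Measure E) [IsFiniteMeasure μ]
    (hatomless : ∀ B : Set E, MeasurableSet B → 0 < μ B →
      ∃ C ⊆ B, MeasurableSet C ∧ 0 < μ C ∧ μ C < μ B)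
    (A : Set E) (hA : MeasurableSet A) (β : ℝ≥0∞) (hβ : β ≤ μ A) :
    ∃ B ⊆ A, MeasurableSet B ∧ μ B = β := by
  let P : Set E → Prop := fun B => B ⊆ A ∧ MeasurableSet B ∧ μ B ≤ β
  have step : ∀ (n : ℕ) (B : {B // P B}), ∃ C : {B // P B}, B.1 ⊆ C.1 ∧
      ∀ D, P D → B.1 ⊆ D → μ D ≤ μ C.1 + ((n : ℝ≥0∞) + 1)⁻¹ := by
    intro n B
    by_contra! hcon
    have hβt : β ≠ ∞ := ne_top_of_le_ne_top (measure_ne_top μ A) hβ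
    have key : ∀ k : ℕ, ∃ C : {B // P B}, B.1 ⊆ C.1 ∧ k * ((n : ℝ≥0∞) + 1)⁻¹ ≤ μ C.1 := by
      intro k
      induction k with
      | zero => exact ⟨B, subset_rfl, by simp⟩
      | succ k ih =>
        obtain ⟨C, hBC, hC⟩ := ih
        obtain ⟨D, hD, hBD, hlt⟩ := hcon C hBC
        refine ⟨⟨D, hD⟩, hBD, le_trans ?_ hlt.le⟩
        push_cast
        rw [add_mul, one_mul]
        gcongr
    have hne : ((n : ℝ≥0∞) + 1)⁻¹ ≠ 0 :=
      ENNReal.inv_ne_zero.2 (by exact_mod_cast ENNReal.natCast_ne_top (n + 1))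
    obtain ⟨k, hk⟩ := ENNReal.exists_nat_mul_gt hne hβt
    obtain ⟨C, _, hC⟩ := key k
    exact absurd (hk.trans_le (hC.trans C.2.2.2)) (lt_irrefl _)
  choose f hf1 hf2 using step
  let B : ℕ → {B // P B} := fun n => Nat.rec ⟨∅, by simp [P]⟩ (fun n b => f n b) n
  have hBs : ∀ n, B (n + 1) = f n (B n) := fun n => rfl
  have hmono : Monotone (fun n => (B n).1) :=
    monotone_nat_of_le_succ (fun n => by rw [hBs]; exact hf1 n (B n))
  let U := ⋃ n, (B n).1
  have hU : P U := by
    refine ⟨Set.iUnion_subset fun n => (B n).2.1, MeasurableSet.iUnion fun n => (B n).2.2.1, ?_⟩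
    change μ (⋃ n, (B n).1) ≤ β
    rw [hmono.measure_iUnion]
    exact iSup_le fun n => (B n).2.2.2
  have hmax : ∀ D, P D → U ⊆ D → μ D ≤ μ U := by
    intro D hD hUD
    refine ENNReal.le_of_forall_pos_le_add fun ε hε _ => ?_
    obtain ⟨n, hn⟩ := ENNReal.exists_inv_nat_lt (a := (ε : ℝ≥0∞)) (by exact_mod_cast hε.ne')
    refine (hf2 n (B n) D hD ((Set.subset_iUnion (fun n => (B n).1) n).trans hUD)).trans ?_
    rw [← hBs]
    refine add_le_add (measure_mono (Set.subset_iUnion (fun n => (B n).1) (n+1))) ?_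
    exact (ENNReal.inv_le_inv.2 le_self_add).trans hn.le
  refine ⟨U, hU.1, hU.2.1, ?_⟩
  by_contra hne
  have hlt : μ U < β := lt_of_le_of_ne hU.2.2 hne
  have hdiff : 0 < μ (A \ U) := by
    rw [measure_diff hU.1 hU.2.1.nullMeasurableSet (measure_ne_top _ _)]
    exact tsub_pos_of_lt (hlt.trans_le hβ)
  obtain ⟨C, hCs, hC, hC0, hCle⟩ := crrt_small' μ hatomless (A \ U) (hA.diff hU.2.1) hdiff
    (β - μ U) (tsub_pos_of_lt hlt)
  have hdis : Disjoint U C := (Set.disjoint_sdiff_right).mono_right hCs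
  have hUC : μ (U ∪ C) = μ U + μ C := measure_union hdis hC
  have := hmax (U ∪ C) ⟨Set.union_subset hU.1 (hCs.trans Set.diff_subset), hU.2.1.union hC, by
    rw [hUC]
    calc μ U + μ C ≤ μ U + (β - μ U) := by gcongr
      _ = β := add_tsub_cancel_of_le hlt.le⟩ Set.subset_union_left
  rw [hUC] at this
  exact absurd this (not_le.2 (ENNReal.lt_add_right (measure_ne_top _ _) hC0.ne'))

/-- **Measure-splitting lemma (first case in Theorem 4).**
Let `μ, ν` be finite measures with `μ` atomless (every measurable set of positive
`μ`-measure contains a measurable subset of strictly intermediate measure).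
If `μ(A) = α₀ > 0` and `ν(A) = α₀ + d`, then for every `β ≤ α₀`,
`sup { ν(B) : B ⊆ A measurable, μ(B) = β } ≥ β + d·β/α₀`. -/
theorem crrt_stmt_11 {E : Type*} [MeasurableSpace E] (μ ν : Measure E)
    [IsFiniteMeasure μ] [IsFiniteMeasure ν]
    (hatomless : ∀ B : Set E, MeasurableSet B → 0 < μ B →
      ∃ C ⊆ B, MeasurableSet C ∧ 0 < μ C ∧ μ C < μ B)
    (A : Set E) (hA : MeasurableSet A)
    (α₀ d β : ℝ≥0∞) (hα₀ : μ A = α₀) (hα₀pos : 0 < α₀)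
    (hνA : ν A = α₀ + d) (hβ : β ≤ α₀) :
    β + d * β / α₀ ≤
      ⨆ (B : Set E) (_ : MeasurableSet B) (_ : B ⊆ A) (_ : μ B = β), ν B := by
  have hα₀t : α₀ ≠ ∞ := hα₀ ▸ measure_ne_top μ A
  have hβt : β ≠ ∞ := ne_top_of_le_ne_top hα₀t hβ
  suffices h : ∃ B, MeasurableSet B ∧ B ⊆ A ∧ μ B = β ∧ β + d * β / α₀ ≤ ν B by
    obtain ⟨B, h1, h2, h3, h4⟩ := h
    exact h4.trans (le_iSup_of_le B (le_iSup_of_le h1 (le_iSup_of_le h2 (le_iSup_of_le h3 le_rfl))))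
  have hct : ν A / α₀ ≠ ∞ := ENNReal.div_ne_top (measure_ne_top _ _) hα₀pos.ne'
  obtain ⟨c, hc⟩ : ∃ c : NNReal, (c : ℝ≥0∞) = ν A / α₀ := ⟨_, ENNReal.coe_toNNReal hct⟩
  have hcα : (c : ℝ≥0∞) * α₀ = ν A := by
    rw [hc, ENNReal.div_mul_cancel hα₀pos.ne' hα₀t]
  have hgoal : β + d * β / α₀ = c * β := by
    rw [hc, hνA, ENNReal.add_div, ENNReal.div_self hα₀pos.ne' hα₀t, add_mul, one_mul,
      div_eq_mul_inv, div_eq_mul_inv, mul_right_comm]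
  rw [hgoal]
  obtain ⟨s, hs, hs1, hs2⟩ := hahn_decomposition ν (c • μ)
  simp only [Measure.smul_apply, ENNReal.smul_def, smul_eq_mul] at hs1 hs2
  have hP := hA.inter hs
  rcases le_total β (μ (A ∩ s)) with h | h
  · obtain ⟨B, hBs, hB, hμB⟩ := crrt_sierpinski μ hatomless (A ∩ s) hP β h
    refine ⟨B, hB, hBs.trans Set.inter_subset_left, hμB, ?_⟩
    rw [← hμB]
    exact hs1 B hB (hBs.trans Set.inter_subset_right)
  · have hsplit := measure_inter_add_diff (μ := μ) A hs
    have hle : β - μ (A ∩ s) ≤ μ (A \ s) := by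
      rw [tsub_le_iff_left, hsplit, hα₀]
      exact hβ
    obtain ⟨B, hBs, hB, hμB⟩ := crrt_sierpinski μ hatomless (A \ s) (hA.diff hs) _ hle
    have hdis : Disjoint (A ∩ s) B :=
      (Set.disjoint_sdiff_inter.symm).mono_right hBs
    have hVA : A ∩ s ∪ B ⊆ A :=
      Set.union_subset Set.inter_subset_left (hBs.trans Set.diff_subset)
    have hV := hP.union hB
    have hμV : μ (A ∩ s ∪ B) = β := by
      rw [measure_union hdis hB, hμB, add_tsub_cancel_of_le h]
    refine ⟨A ∩ s ∪ B, hV, hVA, hμV, ?_⟩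
    have hR := hs2 (A \ (A ∩ s ∪ B)) (hA.diff hV) (by
      intro x hx hxs
      exact hx.2 (Or.inl ⟨hx.1, hxs⟩))
    have hμ := measure_inter_add_diff (μ := μ) A hV
    have hν := measure_inter_add_diff (μ := ν) A hV
    rw [Set.inter_eq_self_of_subset_right hVA] at hμ hν
    have hfin : (c : ℝ≥0∞) * μ (A \ (A ∩ s ∪ B)) ≠ ∞ :=
      ENNReal.mul_ne_top ENNReal.coe_ne_top (measure_ne_top _ _)
    refine (ENNReal.add_le_add_iff_right hfin).1 ?_
    rw [← hμV, ← mul_add, hμ, hα₀, hcα, ← hν]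
    gcongr
end

section
/- Let (E, 𝓔) be a measurable space and let μ and ν be probability measures on E with μ atomless. Let A ∈ 𝓔 with μ(A) = α₀ < 1 and ν(A) = α₀ + d for some d ≥ 0, and let β ∈ [α₀, 1]. Then sup { ν(B) : B ∈ 𝓔, A ⊆ B, μ(B) = β } ≥ β + d·(1 − β)/(1 − α₀). -/
open MeasureTheory ENNReal

lemma crrt_greedy {X : Type*} [Preorder X] (f : X → ℝ) (hf : ∀ x, 0 ≤ f x)
    (hanti : Antitone f) (hub : ∀ u : ℕ → X, Monotone u → ∃ x, ∀ n, u n ≤ x) (x0 : X) :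
    ∃ x, ∀ y, x ≤ y → f x ≤ f y := by
  have h1 : ∀ (n : ℕ) (x : X), ∃ y, x ≤ y ∧ ∀ z, x ≤ z → f y ≤ f z + 1 / ((n : ℝ) + 1) := by
    intro n x
    have hpos : (0 : ℝ) < 1 / ((n : ℝ) + 1) := by positivity
    have hne : (f '' Set.Ici x).Nonempty := ⟨f x, x, le_refl x, rfl⟩
    have hbdd : BddBelow (f '' Set.Ici x) := ⟨0, by rintro _ ⟨y, _, rfl⟩; exact hf y⟩
    obtain ⟨_, ⟨y, hy, rfl⟩, hlt⟩ := Real.lt_sInf_add_pos hne hpos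
    refine ⟨y, hy, fun z hz => ?_⟩
    have := csInf_le hbdd ⟨z, hz, rfl⟩
    linarith
  choose g hg1 hg2 using h1
  let u : ℕ → X := fun n => Nat.rec x0 (fun n x => g n x) n
  have hu : Monotone u := monotone_nat_of_le_succ (fun n => hg1 n (u n))
  obtain ⟨x, hx⟩ := hub u hu
  refine ⟨x, fun y hy => ?_⟩
  have h2 : ∀ n : ℕ, f x ≤ f y + 1 / ((n : ℝ) + 1) := fun n =>
    (hanti (hx (n + 1))).trans (hg2 n (u n) y ((hx n).trans hy))
  have h3 := (tendsto_one_div_add_atTop_nhds_zero_nat (𝕜 := ℝ)).const_add (f y)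
  rw [add_zero] at h3
  exact ge_of_tendsto' h3 h2

structure CrrtPair {E : Type*} [MeasurableSpace E] (μ ν : Measure E) (A : Set E)
    (p q b : ℝ) where
  L : Set E
  H : Set E
  mL : MeasurableSet L
  mH : MeasurableSet H
  AL : A ⊆ L
  LH : L ⊆ H
  hL : μ.real L ≤ b
  hH : b ≤ μ.real H
  gL : p * μ.real L + q ≤ ν.real L
  gH : p * μ.real H + q ≤ ν.real H

instance {E : Type*} [MeasurableSpace E] (μ ν : Measure E) (A : Set E)
    (p q b : ℝ) : Preorder (CrrtPair μ ν A p q b) where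
  le x y := x.L ⊆ y.L ∧ y.H ⊆ x.H
  le_refl x := ⟨subset_rfl, subset_rfl⟩
  le_trans x y z h1 h2 := ⟨h1.1.trans h2.1, h2.2.trans h1.2⟩

lemma crrt_exists {E : Type*} [MeasurableSpace E] (μ ν : Measure E)
    [IsProbabilityMeasure μ] [IsProbabilityMeasure ν]
    (hatomless : ∀ B : Set E, MeasurableSet B → 0 < μ B →
      ∃ C ⊆ B, MeasurableSet C ∧ 0 < μ C ∧ μ C < μ B)
    (A : Set E) (p q b : ℝ) (x0 : CrrtPair μ ν A p q b) :
    ∃ B, MeasurableSet B ∧ A ⊆ B ∧ μ.real B = b ∧ p * b + q ≤ ν.real B := by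
  obtain ⟨x, hx⟩ := crrt_greedy (fun x : CrrtPair μ ν A p q b => μ.real x.H - μ.real x.L)
    (fun x => sub_nonneg.2 (measureReal_mono x.LH))
    (fun x y h => by
      have h2 : x.L ⊆ y.L ∧ y.H ⊆ x.H := h
      exact sub_le_sub (measureReal_mono h2.2) (measureReal_mono h2.1)) (by
      intro u hu
      have mono : Monotone (fun n => (u n).L) := fun i j h => (hu h).1
      have anti : Antitone (fun n => (u n).H) := fun i j h => (hu h).2
      have tL : ∀ (κ : Measure E) [IsProbabilityMeasure κ], Filter.Tendsto
          (fun n => κ.real (u n).L) Filter.atTop (nhds (κ.real (⋃ n, (u n).L))) := by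
        intro κ _
        exact (ENNReal.tendsto_toReal (measure_ne_top _ _)).comp
          (tendsto_measure_iUnion_atTop mono)
      have tH : ∀ (κ : Measure E) [IsProbabilityMeasure κ], Filter.Tendsto
          (fun n => κ.real (u n).H) Filter.atTop (nhds (κ.real (⋂ n, (u n).H))) := by
        intro κ _
        exact (ENNReal.tendsto_toReal (measure_ne_top _ _)).comp
          (tendsto_measure_iInter_atTop (fun n => (u n).mH.nullMeasurableSet) anti
            ⟨0, measure_ne_top _ _⟩)
      refine ⟨⟨⋃ n, (u n).L, ⋂ n, (u n).H, MeasurableSet.iUnion fun n => (u n).mL,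
        MeasurableSet.iInter fun n => (u n).mH,
        (u 0).AL.trans (Set.subset_iUnion (fun n => (u n).L) 0), ?_,
        le_of_tendsto' (tL μ) fun n => (u n).hL, ge_of_tendsto' (tH μ) fun n => (u n).hH,
        le_of_tendsto_of_tendsto' (((tL μ).const_mul p).add_const q) (tL ν) fun n => (u n).gL,
        le_of_tendsto_of_tendsto' (((tH μ).const_mul p).add_const q) (tH ν) fun n => (u n).gH⟩,
        fun n => ⟨Set.subset_iUnion (fun n => (u n).L) n,
          Set.iInter_subset (fun n => (u n).H) n⟩⟩
      refine Set.iUnion_subset fun i => Set.subset_iInter fun j => ?_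
      exact (mono (le_max_left i j)).trans ((u (max i j)).LH.trans (anti (le_max_right i j)))) x0
  have key : ∀ (κ : Measure E) [IsProbabilityMeasure κ],
      κ.real (x.H \ x.L) = κ.real x.H - κ.real x.L :=
    fun κ _ => measureReal_diff x.LH x.mL
  by_cases h0 : μ (x.H \ x.L) = 0
  · have h1 : μ.real (x.H \ x.L) = 0 := by simp [Measure.real, h0]
    rw [key] at h1
    have e : μ.real x.L = b := le_antisymm x.hL (by linarith [x.hH])
    exact ⟨x.L, x.mL, x.AL, e, by have := x.gL; rwa [e] at this⟩
  exfalso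
  have mD := x.mH.diff x.mL
  obtain ⟨P, hPD, mP, hP0, hPlt⟩ := hatomless _ mD (pos_iff_ne_zero.2 h0)
  have rP0 : 0 < μ.real P := ENNReal.toReal_pos hP0.ne' (measure_ne_top _ _)
  have rPlt : μ.real P < μ.real (x.H \ x.L) :=
    (ENNReal.toReal_lt_toReal (measure_ne_top _ _) (measure_ne_top _ _)).2 hPlt
  have un : ∀ (κ : Measure E) [IsProbabilityMeasure κ] (Q : Set E), Q ⊆ x.H \ x.L →
      MeasurableSet Q → κ.real (x.L ∪ Q) = κ.real x.L + κ.real Q := by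
    intro κ _ Q hQ mQ
    exact measureReal_union (Set.disjoint_left.2 fun a ha hq => (hQ hq).2 ha) mQ
  have step : ∀ Q : Set E, Q ⊆ x.H \ x.L → MeasurableSet Q → 0 < μ.real Q →
      μ.real Q < μ.real (x.H \ x.L) → ν.real x.L + ν.real Q <
        p * (μ.real x.L + μ.real Q) + q := by
    intro Q hQ mQ hQ0 hQlt
    by_contra! hcon
    rw [← un μ Q hQ mQ, ← un ν Q hQ mQ] at hcon
    rw [key] at hQlt
    have hsub : x.L ∪ Q ⊆ x.H := Set.union_subset x.LH (hQ.trans Set.diff_subset)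
    rcases le_total (μ.real (x.L ∪ Q)) b with h | h
    · have := hx ⟨x.L ∪ Q, x.H, x.mL.union mQ, x.mH, x.AL.trans Set.subset_union_left, hsub,
        h, x.hH, hcon, x.gH⟩ ⟨Set.subset_union_left, subset_rfl⟩
      simp only [un μ Q hQ mQ] at this
      linarith
    · have := hx ⟨x.L, x.L ∪ Q, x.mL, x.mL.union mQ, x.AL, Set.subset_union_left,
        x.hL, h, x.gL, hcon⟩ ⟨subset_rfl, hsub⟩
      simp only [un μ Q hQ mQ] at this
      linarith
  have d : ∀ (κ : Measure E) [IsProbabilityMeasure κ],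
      κ.real ((x.H \ x.L) \ P) = κ.real x.H - κ.real x.L - κ.real P :=
    fun κ _ => by rw [measureReal_diff hPD mP, key]
  have s1 := step P hPD mP rP0 rPlt
  have s2 := step _ Set.diff_subset (mD.diff mP) (by rw [d, ← key]; linarith)
    (by rw [d, ← key]; linarith)
  rw [d, d] at s2
  linarith [x.gL, x.gH]

/-- **Measure-enlarging lemma (second case in Theorem 4).**
Let `μ, ν` be probability measures with `μ` atomless (every measurable set of positive
`μ`-measure contains a measurable subset of strictly intermediate measure).
If `μ(A) = α₀ < 1` and `ν(A) = α₀ + d`, then for every `β` with `α₀ ≤ β ≤ 1`,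
`sup { ν(B) : B ⊇ A measurable, μ(B) = β } ≥ β + d·(1 − β)/(1 − α₀)`. -/
theorem crrt_stmt_12 {E : Type*} [MeasurableSpace E] (μ ν : Measure E)
    [IsProbabilityMeasure μ] [IsProbabilityMeasure ν]
    (hatomless : ∀ B : Set E, MeasurableSet B → 0 < μ B →
      ∃ C ⊆ B, MeasurableSet C ∧ 0 < μ C ∧ μ C < μ B)
    (A : Set E) (hA : MeasurableSet A)
    (α₀ d β : ℝ≥0∞) (hα₀ : μ A = α₀) (hα₀lt : α₀ < 1)
    (hνA : ν A = α₀ + d) (hβ₁ : α₀ ≤ β) (hβ₂ : β ≤ 1) :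
    β + d * (1 - β) / (1 - α₀) ≤
      ⨆ (B : Set E) (_ : MeasurableSet B) (_ : A ⊆ B) (_ : μ B = β), ν B := by
  have hαt : α₀ ≠ ∞ := (hα₀lt.trans one_lt_top).ne
  have hβt : β ≠ ∞ := (hβ₂.trans_lt one_lt_top).ne
  have hdt : d ≠ ∞ := by
    intro h
    rw [h, add_top] at hνA
    exact measure_ne_top _ _ hνA
  have ra : α₀.toReal < 1 := by
    simpa using (ENNReal.toReal_lt_toReal hαt one_ne_top).2 hα₀lt
  have rb : β.toReal ≤ 1 := by
    simpa using (ENNReal.toReal_le_toReal hβt one_ne_top).2 hβ₂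
  have rab : α₀.toReal ≤ β.toReal := (ENNReal.toReal_le_toReal hαt hβt).2 hβ₁
  have rμ : μ.real A = α₀.toReal := by rw [Measure.real, hα₀]
  have rν : ν.real A = α₀.toReal + d.toReal := by
    rw [Measure.real, hνA, ENNReal.toReal_add hαt hdt]
  have hne : 1 - α₀.toReal ≠ 0 := by linarith
  obtain ⟨B, mB, hAB, hB, hνB⟩ := crrt_exists μ ν hatomless A
    (1 - d.toReal / (1 - α₀.toReal)) (d.toReal / (1 - α₀.toReal)) β.toReal
    ⟨A, Set.univ, hA, MeasurableSet.univ, subset_rfl, Set.subset_univ _,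
      by rw [rμ]; exact rab, by simpa using rb,
      by rw [rμ, rν]; apply le_of_eq; field_simp; ring, by simp⟩
  have hB' : μ B = β := (ENNReal.toReal_eq_toReal_iff' (measure_ne_top _ _) hβt).1 hB
  refine le_trans ?_ (le_iSup₂_of_le B mB (le_iSup₂_of_le hAB hB' le_rfl))
  have h1 : 1 - α₀ ≠ 0 := (tsub_pos_of_lt hα₀lt).ne'
  have h2 : d * (1 - β) / (1 - α₀) ≠ ∞ :=
    ENNReal.div_ne_top (ENNReal.mul_ne_top hdt (by simp)) h1
  rw [← ENNReal.toReal_le_toReal (ENNReal.add_ne_top.2 ⟨hβt, h2⟩) (measure_ne_top _ _),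
    ENNReal.toReal_add hβt h2, ENNReal.toReal_div, ENNReal.toReal_mul,
    ENNReal.toReal_sub_of_le hβ₂ one_ne_top, ENNReal.toReal_sub_of_le hα₀lt.le one_ne_top,
    ENNReal.toReal_one]
  refine le_trans (le_of_eq ?_) hνB
  field_simp
  ring
end

section
/- Let b ≥ 1, let λ ∈ {1, …, b}, let ε ≥ 0, and let M_0 ≥ M_1 ≥ … ≥ M_b ≥ 0 be real numbers with M_0 > 0 and M_0 ≥ e^{ε} · M_λ. Write S = M_0 + M_1 + … + M_b. Then ( (M_0 + M_1 + … + M_{λ−1})/S − λ/(b+1) ) · (S / M_0) ≥ (1 − λ/(b+1)) · (1 − e^{−ε}). -/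
/-- **Deterministic minimization inequality (Theorem 5 core).**
Let `M_0 ≥ M_1 ≥ … ≥ M_b ≥ 0` with `M_0 > 0` and `M_0 ≥ e^ε · M_λ` for some
`λ ∈ {1, …, b}` and `ε ≥ 0`, and write `S = Σ_i M_i`.  Then
`((M_0 + … + M_{λ−1})/S − λ/(b+1)) · (S/M_0) ≥ (1 − λ/(b+1)) · (1 − e^{−ε})`. -/
theorem crrt_stmt_14 (b : ℕ) (hb : 1 ≤ b) (lam : ℕ) (hlam1 : 1 ≤ lam) (hlamb : lam ≤ b)
    (ε : ℝ) (hε : 0 ≤ ε) (M : Fin (b + 1) → ℝ)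
    (hmono : ∀ i j : Fin (b + 1), i ≤ j → M j ≤ M i)
    (hnonneg : ∀ i, 0 ≤ M i) (hpos : 0 < M 0)
    (hgap : Real.exp ε * M ⟨lam, by omega⟩ ≤ M 0) :
    (1 - (lam : ℝ) / (b + 1)) * (1 - Real.exp (-ε)) ≤
      ((∑ i ∈ Finset.univ.filter fun i : Fin (b + 1) => i.val < lam, M i)
          / (∑ i, M i) - (lam : ℝ) / (b + 1)) * ((∑ i, M i) / M 0) := by
  set m := M ⟨lam, by omega⟩ with hm
  set T := ∑ i ∈ Finset.univ.filter fun i : Fin (b + 1) => i.val < lam, M i with hT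
  set R := ∑ i ∈ Finset.univ.filter fun i : Fin (b + 1) => ¬ i.val < lam, M i with hR
  have hS : ∑ i, M i = T + R :=
    (Finset.sum_filter_add_sum_filter_not Finset.univ (fun i : Fin (b + 1) => i.val < lam) M).symm
  have hc1 : (Finset.univ.filter fun i : Fin (b + 1) => i.val < lam).card = lam := by
    rw [Fin.card_filter_val_lt]; omega
  have hc2 : (lam : ℝ) + ((Finset.univ.filter fun i : Fin (b + 1) => ¬ i.val < lam).card : ℝ)
      = b + 1 := by
    have h := Finset.card_filter_add_card_filter_not (s := Finset.univ)
      (fun i : Fin (b + 1) => i.val < lam)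
    rw [hc1, Finset.card_univ, Fintype.card_fin] at h
    exact_mod_cast h
  have hT1 : M 0 - m ≤ T - lam * m := by
    have h := Finset.single_le_sum (f := fun i => M i - m)
      (s := Finset.univ.filter fun i : Fin (b + 1) => i.val < lam) (a := 0)
      (fun i hi => by
        have hi' := (Finset.mem_filter.mp hi).2
        exact sub_nonneg.mpr (hmono _ _ (Fin.le_def.mpr hi'.le)))
      (by simp; omega)
    rw [Finset.sum_sub_distrib, Finset.sum_const, hc1, nsmul_eq_mul] at h
    exact h
  have hR1 : R ≤ (b + 1 - lam) * m := by
    have h := Finset.sum_le_card_nsmul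
      (Finset.univ.filter fun i : Fin (b + 1) => ¬ i.val < lam) M m
      (fun i hi => by
        have hi' := (Finset.mem_filter.mp hi).2
        exact hmono _ _ (Fin.le_def.mpr (not_lt.mp hi')))
    rw [nsmul_eq_mul] at h
    rw [← hc2, add_sub_cancel_left]
    exact h
  have hSpos : 0 < ∑ i, M i :=
    lt_of_lt_of_le hpos (Finset.single_le_sum (fun i _ => hnonneg i) (Finset.mem_univ 0))
  have hgap' : m ≤ Real.exp (-ε) * M 0 := by
    have h := mul_le_mul_of_nonneg_left hgap (Real.exp_pos (-ε)).le
    rwa [← mul_assoc, ← Real.exp_add, neg_add_cancel, Real.exp_zero, one_mul] at h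
  have hb1 : (0 : ℝ) < b + 1 := by positivity
  have hlb : (lam : ℝ) ≤ b := by exact_mod_cast hlamb
  set c : ℝ := (lam : ℝ) / (b + 1) with hc
  have hcl : c * (b + 1) = lam := by rw [hc]; field_simp
  have hc0 : 0 ≤ c := by positivity
  have hcle : 0 ≤ 1 - c := by
    rw [hc, sub_nonneg, div_le_one hb1]; linarith
  have e : (T / (∑ i, M i) - c) * ((∑ i, M i) / M 0) = (T - c * (T + R)) / M 0 := by
    rw [← hS]; field_simp
  rw [e, le_div_iff₀ hpos]
  have h1 := mul_le_mul_of_nonneg_left hT1 hcle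
  have h2 := mul_le_mul_of_nonneg_left hR1 hc0
  have h3 := mul_le_mul_of_nonneg_left hgap' hcle
  have h4 : c * ((b + 1 - lam) * m) = (1 - c) * (lam * m) := by
    linear_combination m * hcl
  linarith
end

section
/- Let b ≥ 1, let α ∈ [0, 1] with λ = ⌊(b+1)α⌋ ∈ {1, …, b}, let ε ≥ 0 and c ≥ 0. On a probability space let W = (W_0, W_1, …, W_b) be a random vector satisfying W_0 ≥ W_1 ≥ … ≥ W_b ≥ 0 and W_0 > 0 almost surely, and write S = W_0 + … + W_b. Suppose E[ (W_0/S) · 1{ W_0 ≥ e^{ε} · W_λ } ] ≥ c. Then E[ (W_0 + W_1 + … + W_{λ−1}) / S ] ≥ λ/(b+1) + c · (1 − λ/(b+1)) · (1 − e^{−ε}). -/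
open MeasureTheory

lemma crrt_aux (b lam : ℕ) (hlam1 : 1 ≤ lam) (hlamb : lam ≤ b) (w : Fin (b + 1) → ℝ)
    (hm : ∀ i j : Fin (b + 1), i ≤ j → w j ≤ w i) (l : Fin (b + 1)) (hl : l.val = lam) :
    ((b : ℝ) + 1 - lam) * (w 0 - w l) ≤
      ((b : ℝ) + 1) * (∑ i ∈ Finset.univ.filter fun i : Fin (b + 1) => i.val < lam, w i)
        - lam * ∑ r, w r := by
  have hcard : (Finset.univ.filter fun i : Fin (b + 1) => i.val < lam).card = lam := by
    have h : (Finset.univ.filter fun i : Fin (b + 1) => i.val < lam) = Finset.Iio l := by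
      ext i
      simp [Fin.lt_def, hl]
    rw [h, Fin.card_Iio, hl]
  have hsplit := Finset.sum_filter_add_sum_filter_not Finset.univ
    (fun i : Fin (b + 1) => i.val < lam) w
  have hcs := Finset.card_filter_add_card_filter_not (s := Finset.univ)
    (fun i : Fin (b + 1) => i.val < lam)
  rw [hcard, Finset.card_univ, Fintype.card_fin] at hcs
  have hB := Finset.sum_le_card_nsmul
    (Finset.univ.filter fun i : Fin (b + 1) => ¬ i.val < lam) w (w l) (by
      intro i hi
      apply hm
      simp only [Finset.mem_filter, Finset.mem_univ, true_and, not_lt] at hi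
      rw [Fin.le_def, hl]
      exact hi)
  have h0 : (0 : Fin (b + 1)) ∈ Finset.univ.filter fun i : Fin (b + 1) => i.val < lam := by
    simp
    omega
  have hA := Finset.card_nsmul_le_sum
    ((Finset.univ.filter fun i : Fin (b + 1) => i.val < lam).erase 0) w (w l) (by
      intro i hi
      apply hm
      simp only [Finset.mem_erase, Finset.mem_filter, Finset.mem_univ, true_and] at hi
      rw [Fin.le_def, hl]
      exact hi.2.le)
  have hA' := Finset.add_sum_erase _ w h0
  rw [Finset.card_erase_of_mem h0, hcard, nsmul_eq_mul, Nat.cast_sub hlam1] at hA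
  rw [nsmul_eq_mul] at hB
  have hcs' : (lam : ℝ) + ((Finset.univ.filter
      fun i : Fin (b + 1) => ¬ i.val < lam).card : ℝ) = b + 1 := by exact_mod_cast hcs
  rw [eq_sub_of_add_eq' hcs'] at hB
  rw [← hsplit]
  have hlb : (lam : ℝ) ≤ b := by exact_mod_cast hlamb
  generalize (∑ i ∈ Finset.univ.filter fun i : Fin (b + 1) => i.val < lam, w i) = A at *
  generalize (∑ i ∈ Finset.univ.filter fun i : Fin (b + 1) => ¬ i.val < lam, w i) = B at *
  have hA2 : w 0 + ((lam : ℝ) - 1) * w l ≤ A := by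
    push_cast at hA
    linarith
  have h1 := mul_le_mul_of_nonneg_left hA2 (by linarith : (0 : ℝ) ≤ (b : ℝ) + 1 - lam)
  have h2 := mul_le_mul_of_nonneg_left hB (Nat.cast_nonneg lam : (0 : ℝ) ≤ (lam : ℝ))
  linarith

/-- **Theorem 5, statement 2 (type-1 error lower bound under misspecification),
abstract form.**  Let `W = (W_0, …, W_b)` be a random weight vector that is almost
surely nonincreasing, nonnegative, with `W_0 > 0`, and write `S = Σ_r W_r`.
Let `λ = ⌊(b+1)α⌋ ∈ {1, …, b}`.  If `E[(W_0/S) · 1{W_0 ≥ e^ε W_λ}] ≥ c`, then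
`E[(W_0 + … + W_{λ−1})/S] ≥ λ/(b+1) + c·(1 − λ/(b+1))·(1 − e^{−ε})`. -/
theorem crrt_stmt_15 {Ω : Type*} [MeasurableSpace Ω]
    (P : Measure Ω) [IsProbabilityMeasure P]
    (b : ℕ) (hb : 1 ≤ b) (α : ℝ) (hα : α ∈ Set.Icc (0 : ℝ) 1)
    (lam : ℕ) (hlam : lam = ⌊(b + 1 : ℝ) * α⌋₊) (hlam1 : 1 ≤ lam) (hlamb : lam ≤ b)
    (ε c : ℝ) (hε : 0 ≤ ε) (hc : 0 ≤ c)
    (W : Ω → Fin (b + 1) → ℝ) (hW : Measurable W)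
    (hWas : ∀ᵐ ω ∂P, (∀ i j : Fin (b + 1), i ≤ j → W ω j ≤ W ω i) ∧
      (∀ i, 0 ≤ W ω i) ∧ 0 < W ω 0)
    (hcond : c ≤ ∫ ω, (if Real.exp ε * W ω ⟨lam, by omega⟩ ≤ W ω 0
        then W ω 0 / ∑ r, W ω r else 0) ∂P) :
    (lam : ℝ) / (b + 1) + c * (1 - (lam : ℝ) / (b + 1)) * (1 - Real.exp (-ε))
      ≤ ∫ ω, (∑ i ∈ Finset.univ.filter fun i : Fin (b + 1) => i.val < lam, W ω i)
          / ∑ r, W ω r ∂P := by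
  have hlb : (lam : ℝ) ≤ b := by exact_mod_cast hlamb
  have hn : (0 : ℝ) < (b : ℝ) + 1 := by positivity
  have hWi : ∀ i, Measurable fun ω => W ω i := fun i => (measurable_pi_apply i).comp hW
  have hS : Measurable fun ω => ∑ r, W ω r := Finset.measurable_sum _ fun i _ => hWi i
  have hA : Measurable fun ω =>
      ∑ i ∈ Finset.univ.filter fun i : Fin (b + 1) => i.val < lam, W ω i :=
    Finset.measurable_sum _ fun i _ => hWi i
  have hE : Real.exp (-ε) ≤ 1 := Real.exp_le_one_iff.mpr (by linarith)
  have hk : 0 ≤ 1 - (lam : ℝ) / (b + 1) := by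
    rw [sub_nonneg, div_le_one hn]
    linarith
  have hint1 : Integrable (fun ω => if Real.exp ε * W ω ⟨lam, by omega⟩ ≤ W ω 0
        then W ω 0 / ∑ r, W ω r else 0) P := by
    refine Integrable.of_bound (C := 1) (Measurable.aestronglyMeasurable ?_) ?_
    · exact Measurable.ite (measurableSet_le ((hWi _).const_mul _) (hWi 0))
        ((hWi 0).div hS) measurable_const
    · filter_upwards [hWas] with ω ⟨_, h2, h3⟩
      have hle : W ω 0 ≤ ∑ r, W ω r :=
        Finset.single_le_sum (fun i _ => h2 i) (Finset.mem_univ 0)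
      have hSp : 0 < ∑ r, W ω r := h3.trans_le hle
      split_ifs
      · rw [Real.norm_of_nonneg (by positivity)]
        exact (div_le_one hSp).mpr hle
      · simp
  have hint2 : Integrable (fun ω =>
      (∑ i ∈ Finset.univ.filter fun i : Fin (b + 1) => i.val < lam, W ω i)
          / ∑ r, W ω r) P := by
    refine Integrable.of_bound (C := 1) (hA.div hS).aestronglyMeasurable ?_
    filter_upwards [hWas] with ω ⟨_, h2, h3⟩
    have hle : W ω 0 ≤ ∑ r, W ω r :=
      Finset.single_le_sum (fun i _ => h2 i) (Finset.mem_univ 0)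
    have hSp : 0 < ∑ r, W ω r := h3.trans_le hle
    rw [Real.norm_of_nonneg (div_nonneg (Finset.sum_nonneg fun i _ => h2 i) hSp.le)]
    exact (div_le_one hSp).mpr
      (Finset.sum_le_sum_of_subset_of_nonneg (Finset.filter_subset _ _) fun i _ _ => h2 i)
  have hK : 0 ≤ (1 - (lam : ℝ) / (b + 1)) * (1 - Real.exp (-ε)) :=
    mul_nonneg hk (by linarith)
  calc (lam : ℝ) / (b + 1) + c * (1 - (lam : ℝ) / (b + 1)) * (1 - Real.exp (-ε))
      ≤ (lam : ℝ) / (b + 1) + ((1 - (lam : ℝ) / (b + 1)) * (1 - Real.exp (-ε))) *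
        ∫ ω, (if Real.exp ε * W ω ⟨lam, by omega⟩ ≤ W ω 0
        then W ω 0 / ∑ r, W ω r else 0) ∂P := by
          have := mul_le_mul_of_nonneg_left hcond hK
          linarith
    _ = ∫ ω, ((lam : ℝ) / (b + 1) + ((1 - (lam : ℝ) / (b + 1)) * (1 - Real.exp (-ε))) *
        (if Real.exp ε * W ω ⟨lam, by omega⟩ ≤ W ω 0
        then W ω 0 / ∑ r, W ω r else 0)) ∂P := by
          rw [integral_add (integrable_const _) (hint1.const_mul _), integral_const_mul]
          simp
    _ ≤ _ := by
          refine integral_mono_ae ((integrable_const _).add (hint1.const_mul _)) hint2 ?_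
          filter_upwards [hWas] with ω ⟨h1, h2, h3⟩
          have hle : W ω 0 ≤ ∑ r, W ω r :=
            Finset.single_le_sum (fun i _ => h2 i) (Finset.mem_univ 0)
          have hSp : 0 < ∑ r, W ω r := h3.trans_le hle
          have key := crrt_aux b lam hlam1 hlamb (W ω) h1 ⟨lam, by omega⟩ rfl
          have hl0 := h1 0 ⟨lam, by omega⟩ (Fin.zero_le _)
          rw [le_div_iff₀ hSp]
          have hnk : (0 : ℝ) ≤ (b : ℝ) + 1 - lam := by linarith
          have hkk : 1 - (lam : ℝ) / (b + 1) = ((b : ℝ) + 1 - lam) / (b + 1) := by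
            field_simp
          rw [hkk]
          generalize (∑ i ∈ Finset.univ.filter fun i : Fin (b + 1) => i.val < lam, W ω i) = A
            at *
          generalize (∑ r, W ω r) = S at *
          split_ifs with h
          · have h5 : W ω ⟨lam, by omega⟩ ≤ Real.exp (-ε) * W ω 0 := by
              have := mul_le_mul_of_nonneg_left h (Real.exp_pos (-ε)).le
              rwa [← mul_assoc, ← Real.exp_add, neg_add_cancel, Real.exp_zero, one_mul] at this
            have h6 := mul_le_mul_of_nonneg_left h5 hnk
            have h7 : ((lam : ℝ) / (b + 1) + ((b : ℝ) + 1 - lam) / (b + 1) *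
                (1 - Real.exp (-ε)) * (W ω 0 / S)) * S =
                (lam * S + ((b : ℝ) + 1 - lam) * (1 - Real.exp (-ε)) * W ω 0) / (b + 1) := by
              field_simp
            rw [h7, div_le_iff₀ hn]
            linarith
          · have h6 := mul_nonneg hnk (sub_nonneg.mpr hl0)
            rw [mul_zero, add_zero, div_mul_eq_mul_div, div_le_iff₀ hn]
            linarith
end

section
/- Let E be a measurable space, b ≥ 1, and let T : E^{b+1} → ℝ^{b+1} be X-symmetric, i.e., T(x ∘ σ) = T(x) ∘ σ for every permutation σ of {0, 1, …, b}. Let u ∈ E^{b+1} be such that the values T(u)_0, T(u)_1, …, T(u)_b are pairwise distinct. Then: (i) for any two permutations σ, σ' of {0, 1, …, b} with σ(0) = σ'(0), the rank of T(u ∘ σ)_0 within the multiset {T(u ∘ σ)_k : k = 0, …, b} equals the rank of T(u ∘ σ')_0 within {T(u ∘ σ')_k : k = 0, …, b}; and (ii) for permutations σ, σ' with σ(0) ≠ σ'(0), these two ranks are different. Consequently there is a bijection Ψ from ranks {1, …, b+1} to the entries {u_0, …, u_b} such that T(u ∘ σ)_0 has rank r if and only if u_{σ(0)} = Ψ(r).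 -/
/-- **Claim 1 in the proof of Theorem 3.**
Let `T : E^{b+1} → ℝ^{b+1}` be `X`-symmetric and let `u ∈ E^{b+1}` be such that the
values `T(u)_0, …, T(u)_b` are pairwise distinct.  Writing, for a configuration `x`,
`rank(x) = #{k : T(x)_0 ≤ T(x)_k}` (the 1-based rank of `T(x)_0` from the top), then:
(i) permutations with the same first value give the same rank;
(ii) permutations with different first values give different ranks;
(iii) there is a bijection `Ψ` from ranks `{1, …, b+1}` onto the entries of `u` such
that `T(u ∘ σ)_0` has rank `r` iff `u (σ 0) = Ψ r` (with rank `r` encoded as `r.val + 1`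
for `r : Fin (b+1)`). -/
theorem crrt_stmt_16 {E : Type*} [MeasurableSpace E] (b : ℕ) (hb : 1 ≤ b)
    (T : (Fin (b + 1) → E) → Fin (b + 1) → ℝ)
    (hsym : ∀ (x : Fin (b + 1) → E) (σ : Equiv.Perm (Fin (b + 1))),
      T (fun i => x (σ i)) = fun i => T x (σ i))
    (u : Fin (b + 1) → E)
    (hdist : Function.Injective (T u)) :
    (∀ σ σ' : Equiv.Perm (Fin (b + 1)), σ 0 = σ' 0 →
      (Finset.univ.filter fun k : Fin (b + 1) =>
          T (fun i => u (σ i)) 0 ≤ T (fun i => u (σ i)) k).card =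
        (Finset.univ.filter fun k : Fin (b + 1) =>
          T (fun i => u (σ' i)) 0 ≤ T (fun i => u (σ' i)) k).card) ∧
    (∀ σ σ' : Equiv.Perm (Fin (b + 1)), σ 0 ≠ σ' 0 →
      (Finset.univ.filter fun k : Fin (b + 1) =>
          T (fun i => u (σ i)) 0 ≤ T (fun i => u (σ i)) k).card ≠
        (Finset.univ.filter fun k : Fin (b + 1) =>
          T (fun i => u (σ' i)) 0 ≤ T (fun i => u (σ' i)) k).card) ∧
    (∃ Ψ : Fin (b + 1) → E, Function.Injective Ψ ∧ Set.range Ψ = Set.range u ∧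
      ∀ (σ : Equiv.Perm (Fin (b + 1))) (r : Fin (b + 1)),
        ((Finset.univ.filter fun k : Fin (b + 1) =>
            T (fun i => u (σ i)) 0 ≤ T (fun i => u (σ i)) k).card = r.val + 1
          ↔ u (σ 0) = Ψ r)) := by
  classical
  have hR : ∀ σ : Equiv.Perm (Fin (b + 1)),
      (Finset.univ.filter fun k : Fin (b + 1) =>
          T (fun i => u (σ i)) 0 ≤ T (fun i => u (σ i)) k).card =
      (Finset.univ.filter fun k : Fin (b + 1) => T u (σ 0) ≤ T u k).card := by
    intro σ
    rw [hsym u σ]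
    refine Finset.card_bij (fun k _ => σ k) ?_ ?_ ?_
    · intro k hk
      simpa using hk
    · intro k _ l _ h
      exact σ.injective h
    · intro k hk
      refine ⟨σ.symm k, ?_, by simp⟩
      simpa using hk
  have hlt : ∀ i j, T u i < T u j →
      (Finset.univ.filter fun k : Fin (b + 1) => T u j ≤ T u k).card <
      (Finset.univ.filter fun k : Fin (b + 1) => T u i ≤ T u k).card := by
    intro i j h
    apply Finset.card_lt_card
    rw [Finset.ssubset_iff_of_subset]
    · exact ⟨i, by simp, by simpa using h⟩
    · intro k hk
      simp only [Finset.mem_filter, Finset.mem_univ, true_and] at hk ⊢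
      exact h.le.trans hk
  have hne : ∀ i j, i ≠ j →
      (Finset.univ.filter fun k : Fin (b + 1) => T u i ≤ T u k).card ≠
      (Finset.univ.filter fun k : Fin (b + 1) => T u j ≤ T u k).card := by
    intro i j h
    rcases lt_or_gt_of_ne (hdist.ne h) with h | h
    · exact (hlt _ _ h).ne'
    · exact (hlt _ _ h).ne
  have hu : Function.Injective u := by
    intro i j h
    apply hdist
    have h1 := hsym u (Equiv.swap i j)
    have h2 : (fun k => u (Equiv.swap i j k)) = u := by
      funext k
      rw [Equiv.swap_apply_def]
      split_ifs with h3 h4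
      · rw [h3, h]
      · rw [h4, h]
      · rfl
    rw [h2] at h1
    simpa using congrFun h1 i
  have hpos : ∀ j, 0 < (Finset.univ.filter fun k : Fin (b + 1) => T u j ≤ T u k).card :=
    fun j => Finset.card_pos.mpr ⟨j, by simp⟩
  have hle : ∀ j, (Finset.univ.filter fun k : Fin (b + 1) => T u j ≤ T u k).card ≤ b + 1 :=
    fun j => (Finset.card_le_univ _).trans (by simp)
  refine ⟨?_, ?_, ?_⟩
  · intro σ σ' h
    rw [hR, hR, h]
  · intro σ σ' h
    rw [hR, hR]
    exact hne _ _ h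
  · let f : Fin (b + 1) → Fin (b + 1) := fun j =>
      ⟨(Finset.univ.filter fun k : Fin (b + 1) => T u j ≤ T u k).card - 1, by
        have := hpos j
        have := hle j
        omega⟩
    have hfv : ∀ j, (f j).val + 1 =
        (Finset.univ.filter fun k : Fin (b + 1) => T u j ≤ T u k).card :=
      fun j => Nat.sub_add_cancel (hpos j)
    have hf : Function.Injective f := by
      intro i j h
      by_contra hij
      apply hne i j hij
      rw [← hfv, ← hfv, h]
    let e := Equiv.ofBijective f (Finite.injective_iff_bijective.mp hf)
    refine ⟨fun r => u (e.symm r), hu.comp e.symm.injective, ?_, ?_⟩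
    · exact e.symm.surjective.range_comp u
    · intro σ r
      rw [hR, ← hfv, hu.eq_iff, Equiv.eq_symm_apply]
      change _ ↔ f (σ 0) = r
      rw [Fin.ext_iff]
      omega
end

section
/- Let (E, 𝓔, m) be a σ-finite measure space, let n ≥ 1, and let f* and f be nonnegative measurable functions on Eⁿ with ∫ f* dmⁿ = ∫ f dmⁿ = 1, where mⁿ is the n-fold product measure. For x ∈ Eⁿ and a permutation σ of {1, …, n}, write x_σ for the vector with coordinates (x_σ)_i = x_{σ(i)}. Define, for g ∈ {f*, f}, the orbit weights r_g(σ, x) = g(x_σ) / Σ_{τ ∈ S_n} g(x_τ) when Σ_{τ} g(x_τ) > 0, and r_g(σ, x) = 0 otherwise. Then ∫_{Eⁿ} [ (1/2) Σ_{σ ∈ S_n} | r_{f*}(σ, x) − r_f(σ, x) | ] f*(x) dmⁿ(x) ≤ ∫_{Eⁿ} | f*(x) − f(x) | dmⁿ(x). -/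
open MeasureTheory

theorem aux_ptwise {ι : Type*} [Fintype ι] (a b : ι → ℝ) (ha : ∀ i, 0 ≤ a i) (hb : ∀ i, 0 ≤ b i) :
    (1 / 2) * (∑ i, |(if 0 < ∑ j, a j then a i / ∑ j, a j else 0) -
      (if 0 < ∑ j, b j then b i / ∑ j, b j else 0)|) * (∑ j, a j) ≤ ∑ i, |a i - b i| := by
  have hA : 0 ≤ ∑ j, a j := Finset.sum_nonneg fun i _ => ha i
  have hB : 0 ≤ ∑ j, b j := Finset.sum_nonneg fun i _ => hb i
  have hD : |∑ j, a j - ∑ j, b j| ≤ ∑ i, |a i - b i| := by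
    rw [← Finset.sum_sub_distrib]; exact Finset.abs_sum_le_sum_abs _ _
  have hD0 : 0 ≤ ∑ i, |a i - b i| := Finset.sum_nonneg fun i _ => abs_nonneg _
  rcases hA.eq_or_lt with h | hA'
  · rw [← h]; simpa using hD0
  set A := ∑ j, a j with hAdef
  set B := ∑ j, b j with hBdef
  have key : ∀ i, |(if 0 < A then a i / A else 0) - (if 0 < B then b i / B else 0)| * A
      ≤ |a i - b i| + (b i / B) * |A - B| := by
    intro i
    rw [if_pos hA']
    by_cases hB' : 0 < B
    · rw [if_pos hB']
      have e : |a i / A - b i / B| * A = |(a i - b i) - (b i / B) * (A - B)| := by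
        rw [← abs_of_pos hA', ← abs_mul, abs_of_pos hA']
        congr 1
        field_simp
        ring
      rw [e]
      refine (abs_sub _ _).trans ?_
      rw [abs_mul, abs_of_nonneg (div_nonneg (hb i) hB)]
    · have hB0 : B = 0 := le_antisymm (not_lt.mp hB') hB
      have hbi : b i = 0 := by
        have := (Finset.sum_eq_zero_iff_of_nonneg (fun i _ => hb i)).1 (hBdef.symm.trans hB0) i
          (Finset.mem_univ i)
        exact this
      rw [if_neg hB', hbi, sub_zero, sub_zero, abs_div, abs_of_pos hA']
      rw [div_mul_cancel₀ _ hA'.ne']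
      simp
  have hs : ∑ i, (b i / B) * |A - B| ≤ |A - B| := by
    rw [← Finset.sum_mul, ← Finset.sum_div, ← hBdef]
    exact mul_le_of_le_one_left (abs_nonneg _) (div_self_le_one B)
  have := Finset.sum_le_sum fun i (_ : i ∈ Finset.univ) => key i
  rw [← Finset.sum_mul, Finset.sum_add_distrib] at this
  rw [mul_assoc]
  linarith

theorem aux_mp {E : Type*} [MeasurableSpace E] (m : Measure E) [SigmaFinite m]
    (n : ℕ) (σ : Equiv.Perm (Fin n)) :
    ∃ e : (Fin n → E) ≃ᵐ (Fin n → E), (∀ x, e x = fun i => x (σ i)) ∧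
      MeasurePreserving e (Measure.pi fun _ : Fin n => m) (Measure.pi fun _ : Fin n => m) := by
  refine ⟨MeasurableEquiv.piCongrLeft (fun _ => E) σ.symm, ?_,
    measurePreserving_piCongrLeft (fun _ => m) σ.symm⟩
  intro x
  funext i
  have := Equiv.piCongrLeft_apply_apply (fun _ => E) σ.symm x (σ i)
  simpa [MeasurableEquiv.coe_piCongrLeft] using this

theorem aux_main {E : Type*} [MeasurableSpace E] (m : Measure E) [SigmaFinite m]
    (n : ℕ) (T g h : (Fin n → E) → ℝ)
    (hT : ∀ (σ : Equiv.Perm (Fin n)) x, T (fun i => x (σ i)) = T x)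
    (hh0 : ∀ x, 0 ≤ h x) (hh : Integrable h (Measure.pi fun _ : Fin n => m))
    (hle : ∀ x, T x * ∑ σ : Equiv.Perm (Fin n), g (fun i => x (σ i)) ≤
      ∑ σ : Equiv.Perm (Fin n), h (fun i => x (σ i))) :
    ∫ x, T x * g x ∂(Measure.pi fun _ : Fin n => m) ≤ ∫ x, h x ∂(Measure.pi fun _ : Fin n => m) := by
  by_cases hi : Integrable (fun x => T x * g x) (Measure.pi fun _ : Fin n => m)
  swap
  · rw [integral_undef hi]; exact integral_nonneg hh0
  have P : ∀ (k : (Fin n → E) → ℝ), Integrable k (Measure.pi fun _ : Fin n => m) →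
      Integrable (fun x => ∑ σ : Equiv.Perm (Fin n), k (fun i => x (σ i)))
        (Measure.pi fun _ : Fin n => m) ∧
      ∫ x, ∑ σ : Equiv.Perm (Fin n), k (fun i => x (σ i)) ∂(Measure.pi fun _ : Fin n => m)
        = (Fintype.card (Equiv.Perm (Fin n)) : ℝ) * ∫ x, k x ∂(Measure.pi fun _ : Fin n => m) := by
    intro k hk
    have h1 : ∀ σ : Equiv.Perm (Fin n), Integrable (fun x => k (fun i => x (σ i)))
        (Measure.pi fun _ : Fin n => m) := by
      intro σ
      obtain ⟨e, he, hm⟩ := aux_mp m n σ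
      have := (hm.integrable_comp_emb e.measurableEmbedding).2 hk
      simpa [Function.comp_def, he] using this
    refine ⟨integrable_finsetSum _ fun σ _ => h1 σ, ?_⟩
    rw [integral_finsetSum _ fun σ _ => h1 σ]
    have h2 : ∀ σ : Equiv.Perm (Fin n), ∫ x, k (fun i => x (σ i)) ∂(Measure.pi fun _ : Fin n => m)
        = ∫ x, k x ∂(Measure.pi fun _ : Fin n => m) := by
      intro σ
      obtain ⟨e, he, hm⟩ := aux_mp m n σ
      have := hm.integral_comp' k
      simpa [he] using this
    simp [h2]
  obtain ⟨a1, a2⟩ := P _ hi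
  obtain ⟨b1, b2⟩ := P _ hh
  have := integral_mono a1 b1 (fun x => by
    have := hle x
    rw [Finset.mul_sum] at this
    simpa [hT] using this)
  rw [a2, b2] at this
  exact le_of_mul_le_mul_left this (by exact_mod_cast Fintype.card_pos)

/-- **Proposition 5 of the paper, density form.**
Let `(E, m)` be σ-finite, `n ≥ 1`, and let `f⋆, f` be nonnegative measurable densities
on `Eⁿ` integrating to 1 against the product measure `mⁿ`.  For a permutation `σ` and
`g ∈ {f⋆, f}`, the orbit weight is `r_g(σ, x) = g(x_σ) / Σ_τ g(x_τ)` (and `0` when the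
denominator vanishes).  Then the average, under the density `f⋆`, of the total-variation
distance `(1/2) Σ_σ |r_{f⋆}(σ, x) − r_f(σ, x)|` between the two orbit distributions is
at most the `L¹` distance `∫ |f⋆ − f| dmⁿ`. -/
theorem crrt_stmt_17 {E : Type*} [MeasurableSpace E] (m : Measure E) [SigmaFinite m]
    (n : ℕ) (hn : 1 ≤ n) (fs f : (Fin n → E) → ℝ)
    (hfs0 : ∀ x, 0 ≤ fs x) (hf0 : ∀ x, 0 ≤ f x)
    (hfsm : Measurable fs) (hfm : Measurable f)
    (hfs1 : ∫ x, fs x ∂(Measure.pi fun _ : Fin n => m) = 1)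
    (hf1 : ∫ x, f x ∂(Measure.pi fun _ : Fin n => m) = 1) :
    ∫ x, (1 / 2) * (∑ σ : Equiv.Perm (Fin n),
        |(if 0 < ∑ τ : Equiv.Perm (Fin n), fs (fun i => x (τ i))
            then fs (fun i => x (σ i)) / ∑ τ : Equiv.Perm (Fin n), fs (fun i => x (τ i))
            else 0) -
          (if 0 < ∑ τ : Equiv.Perm (Fin n), f (fun i => x (τ i))
            then f (fun i => x (σ i)) / ∑ τ : Equiv.Perm (Fin n), f (fun i => x (τ i))
            else 0)|) * fs x ∂(Measure.pi fun _ : Fin n => m)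
      ≤ ∫ x, |fs x - f x| ∂(Measure.pi fun _ : Fin n => m) := by
  have i1 : Integrable fs (Measure.pi fun _ : Fin n => m) :=
    not_imp_comm.1 integral_undef (by rw [hfs1]; exact one_ne_zero)
  have i2 : Integrable f (Measure.pi fun _ : Fin n => m) :=
    not_imp_comm.1 integral_undef (by rw [hf1]; exact one_ne_zero)
  refine aux_main m n _ fs (fun x => |fs x - f x|) ?_ (fun x => abs_nonneg _) (i1.sub i2).abs ?_
  · intro ρ x
    have hs : ∀ k : (Fin n → E) → ℝ, ∑ τ : Equiv.Perm (Fin n), k (fun i => x (ρ (τ i)))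
        = ∑ τ : Equiv.Perm (Fin n), k (fun i => x (τ i)) := fun k =>
      Equiv.sum_comp (Equiv.mulLeft ρ) (fun τ : Equiv.Perm (Fin n) => k (fun i => x (τ i)))
    simp only [hs]
    congr 1
    exact hs (fun y => |(if 0 < ∑ τ : Equiv.Perm (Fin n), fs (fun i => x (τ i))
            then fs y / ∑ τ : Equiv.Perm (Fin n), fs (fun i => x (τ i))
            else 0) -
          (if 0 < ∑ τ : Equiv.Perm (Fin n), f (fun i => x (τ i))
            then f y / ∑ τ : Equiv.Perm (Fin n), f (fun i => x (τ i))
            else 0)|)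
  · intro x
    exact aux_ptwise (fun σ : Equiv.Perm (Fin n) => fs (fun i => x (σ i)))
      (fun σ : Equiv.Perm (Fin n) => f (fun i => x (σ i))) (fun _ => hfs0 _) (fun _ => hf0 _)
end
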